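/- For τ = ib with b > 0, one has g₂(τ) - 12η₁(τ)² > 0. -/

import Mathlib

noncomputable section
open scoped Real
open Complex

/-- The lattice point `m + nτ` of the lattice `ℤ + ℤτ`. -/
def latPt (τ : ℂ) (p : ℤ × ℤ) : ℂ := (p.1 : ℂ) + (p.2 : ℂ) * τ

/-- The Weierstrass zeta function of the lattice `ℤ + ℤτ`:
`ζ(z|τ) = 1/z + ∑'_{ω ≠ 0} (1/(z-ω) + 1/ω + z/ω²)`. -/
def wzeta (τ z : ℂ) : ℂ :=
  1 / z + ∑' p : {p : ℤ × ℤ // p ≠ 0},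
    (1 / (z - latPt τ p.1) + 1 / latPt τ p.1 + z / (latPt τ p.1) ^ 2)

/-- The quasi-period `η₁(τ) = 2ζ(ω₁/2|τ)`, with `ω₁ = 1`. -/
def eta1 (τ : ℂ) : ℂ := 2 * wzeta τ (1 / 2)

/-- The quasi-period `η₂(τ) = 2ζ(ω₂/2|τ)`, with `ω₂ = τ`. -/
def eta2 (τ : ℂ) : ℂ := 2 * wzeta τ (τ / 2)

/-- The Weierstrass invariant `g₂(τ) = 60 ∑'_{ω ∈ (ℤ+ℤτ) \ {0}} ω⁻⁴`. -/
def g2 (τ : ℂ) : ℂ := 60 * ∑' p : {p : ℤ × ℤ // p ≠ 0}, 1 / (latPt τ p.1) ^ 4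

/-!
The proof rests on `η₁ = (π²/3) E₂` and `g₂ = (4π⁴/3) E₄`, which give
`g₂ - 12 η₁² = (4π⁴/3) (E₄ - E₂²)`. The first identity comes from computing the quasi-period
`ζ(z + 1) - ζ(z)` one row of the lattice at a time: the poles telescope, leaving the conditionally
convergent row sums of `1/ω²`, that is, `G₂`.

On the imaginary axis `q > 0`, so `E₂ = 1 - 24 ∑ σ₁(n) qⁿ < 1 < 1 + 240 ∑ σ₃(n) qⁿ = E₄`.
At `-1/z` these bounds read `-E₂(z) < y⁻²` and `y⁻⁴ < E₄(z)` for `z = iy`; the non-modular term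
`6/(πy)` of `E₂` has the favourable sign. Hence `E₂² < 1 < E₄` if `E₂ ≥ 0`, and `E₂² < y⁻⁴ < E₄`
otherwise.
-/

open UpperHalfPlane hiding I
open Filter Topology Asymptotics SummationFilter Bornology ModularForm EisensteinSeries
open scoped ComplexOrder MatrixGroups ArithmeticFunction.sigma

theorem tsum_int_sub_succ_eq_zero {E : Type*} [AddCommGroup E] [TopologicalSpace E]
    [IsTopologicalAddGroup E] [T2Space E] {f : ℤ → E} (hf : Tendsto f cofinite (𝓝 0))
    (hs : Summable fun n ↦ f n - f (n + 1)) : ∑' n, (f n - f (n + 1)) = 0 := by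
  rw [← tsum_eq_of_summable_unconditional (L := symmetricIco ℤ) hs]
  refine HasSum.tsum_eq ?_
  rw [hasSum_symmetricIco_int_iff]
  simp_rw [Finset.sum_Ico_int_sub]
  rw [Int.cofinite_eq, tendsto_sup] at hf
  have hbot := hf.1.comp (tendsto_neg_atTop_atBot.comp (tendsto_natCast_atTop_atTop (R := ℤ)))
  have htop := hf.2.comp (tendsto_natCast_atTop_atTop (R := ℤ))
  simpa using hbot.sub htop

theorem tsum_eq_add_tsum_ne {ι E : Type*} [AddCommGroup E] [UniformSpace E]
    [IsUniformAddGroup E] [CompleteSpace E] [T2Space E] {f : ι → E} (hf : Summable f) (a : ι) :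
    ∑' x, f x = f a + ∑' x : {x // x ≠ a}, f x := by
  rw [← hf.tsum_subtype_add_tsum_subtype_compl {a}, tsum_singleton]
  rfl

/-- The summand of the Weierstrass zeta function at `z` attached to the lattice point `w`. The
value at `w = 0` is the leading term `1 / z`, because `x / 0 = 0`. -/
def zetaSummand (z w : ℂ) : ℂ := 1 / (z - w) + 1 / w + z / w ^ 2

theorem zetaSummand_zero (z : ℂ) : zetaSummand z 0 = 1 / z := by
  simp [zetaSummand]

theorem zetaSummand_neg_neg (z w : ℂ) : zetaSummand (-z) (-w) = -zetaSummand z w := by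
  rw [zetaSummand, zetaSummand, show -z - -w = -(z - w) by ring, div_neg, div_neg, neg_sq, neg_div]
  ring

theorem zetaSummand_add_one_sub (z w : ℂ) :
    zetaSummand (z + 1) w - zetaSummand z w = (1 / (z + 1 - w) - 1 / (z - w)) + 1 / w ^ 2 := by
  simp only [zetaSummand]
  ring

theorem isBigO_zetaSummand (z : ℂ) : zetaSummand z =O[cobounded ℂ] fun w ↦ (w ^ 3)⁻¹ := by
  have hsub : (fun w : ℂ ↦ (z - w)⁻¹) =O[cobounded ℂ] fun w ↦ w⁻¹ := by
    refine (spectrum.resolvent_isBigO_inv (𝕜 := ℂ) z).neg_left.congr_left fun w ↦ ?_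
    rw [resolvent, Ring.inverse_eq_inv', Algebra.algebraMap_self_apply, neg_inv, neg_sub]
  have hmul := (hsub.const_mul_left (z ^ 2)).mul (isBigO_refl (fun w : ℂ ↦ (w ^ 2)⁻¹) _)
  refine hmul.congr' ?_ (.of_forall fun w ↦ by ring)
  filter_upwards [eventually_ne_cobounded 0, eventually_ne_cobounded z] with w hw hwz
  have hzw := sub_ne_zero.mpr hwz.symm
  simp only [zetaSummand]
  field_simp
  ring

section Lattice

theorem latPt_zero (τ : ℂ) : latPt τ 0 = 0 := by
  simp [latPt]

theorem latPt_neg (τ : ℂ) (p : ℤ × ℤ) : latPt τ (-p) = -latPt τ p := by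
  simp only [latPt, Prod.fst_neg, Prod.snd_neg, Int.cast_neg]
  ring

variable (τ : ℍ)

theorem eisSummand_eq_latPt_zpow (k : ℤ) (v : Fin 2 → ℤ) :
    eisSummand k v τ = latPt τ (v 1, v 0) ^ (-k) := by
  simp [eisSummand, latPt, add_comm]

theorem summable_inv_latPt_pow {k : ℕ} (hk : 3 ≤ k) :
    Summable fun p ↦ (latPt τ p ^ k)⁻¹ := by
  refine ((Equiv.prodComm ℤ ℤ).summable_iff.mpr (summable_prod_eisSummand hk τ)).congr fun p ↦ ?_
  simp [eisSummand_eq_latPt_zpow]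

theorem latPt_eq_zero_iff {p : ℤ × ℤ} : latPt τ p = 0 ↔ p = 0 := by
  refine ⟨fun h ↦ ?_, fun h ↦ h ▸ latPt_zero τ⟩
  have him : p.2 = 0 := by simpa [latPt, τ.im_ne_zero] using congrArg Complex.im h
  have hre : p.1 = 0 := by simpa [latPt, him] using congrArg Complex.re h
  exact Prod.ext hre him

theorem tendsto_latPt_cobounded : Tendsto (latPt τ) cofinite (cobounded ℂ) := by
  have hinv := (summable_inv_latPt_pow τ le_rfl).tendsto_cofinite_zero
  have hpow : Tendsto (fun p ↦ latPt τ p ^ 3) cofinite (cobounded ℂ) := by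
    refine (tendsto_inv₀_nhdsNE_zero.comp
      (tendsto_nhdsWithin_iff.mpr ⟨hinv, ?_⟩)).congr fun p ↦ inv_inv _
    filter_upwards [(Set.finite_singleton (0 : ℤ × ℤ)).compl_mem_cofinite] with p hp
    simpa [latPt_eq_zero_iff] using hp
  rw [← tendsto_norm_atTop_iff_cobounded] at hpow ⊢
  refine ((tendsto_rpow_atTop (y := ((3 : ℕ) : ℝ)⁻¹) (by norm_num)).comp hpow).congr fun p ↦ ?_
  rw [Function.comp_apply, norm_pow, Real.pow_rpow_inv_natCast (norm_nonneg _) three_ne_zero]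

theorem summable_zetaSummand (z : ℂ) : Summable fun p ↦ zetaSummand z (latPt τ p) :=
  summable_of_isBigO (summable_inv_latPt_pow τ le_rfl).norm
    ((isBigO_zetaSummand z).comp_tendsto (tendsto_latPt_cobounded τ)).norm_right

theorem wzeta_eq_tsum (z : ℂ) : wzeta τ z = ∑' p, zetaSummand z (latPt τ p) := by
  rw [tsum_eq_add_tsum_ne (summable_zetaSummand τ z) 0, latPt_zero, zetaSummand_zero]
  rfl

theorem wzeta_neg (z : ℂ) : wzeta τ (-z) = -wzeta τ z := by
  rw [wzeta_eq_tsum, wzeta_eq_tsum, ← (Equiv.neg (ℤ × ℤ)).tsum_eq, ← tsum_neg]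
  simp only [Equiv.neg_apply, latPt_neg, zetaSummand_neg_neg]

theorem tsum_zetaSummand_add_one_sub (z : ℂ) (m : ℤ) :
    ∑' n : ℤ, (zetaSummand (z + 1) (latPt τ (n, m)) - zetaSummand z (latPt τ (n, m))) =
      e2Summand m τ := by
  have hpole : Tendsto (fun n : ℤ ↦ (z + 1 - latPt τ (n, m))⁻¹) cofinite (𝓝 0) :=
    tendsto_inv₀_cobounded.comp <| (tendsto_const_sub_cobounded (z + 1)).comp <|
      (tendsto_latPt_cobounded τ).comp (Prod.mk_left_injective m).tendsto_cofinite
  have hdiff (n : ℤ) : zetaSummand (z + 1) (latPt τ (n, m)) - zetaSummand z (latPt τ (n, m)) =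
      ((z + 1 - latPt τ (n, m))⁻¹ - (z + 1 - latPt τ (n + 1, m))⁻¹) + eisSummand 2 ![m, n] τ := by
    have hshift : z - latPt τ (n, m) = z + 1 - latPt τ (n + 1, m) := by
      simp only [latPt, Int.cast_add, Int.cast_one]
      ring
    rw [zetaSummand_add_one_sub, hshift, eisSummand_eq_latPt_zpow]
    simp [zpow_neg]
  have hpoles : Summable fun n : ℤ ↦
      (z + 1 - latPt τ (n, m))⁻¹ - (z + 1 - latPt τ (n + 1, m))⁻¹ := by
    have hrow := (((summable_zetaSummand τ (z + 1)).sub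
      (summable_zetaSummand τ z)).prod_symm.prod_factor m).sub (e2Summand_summable m τ)
    exact hrow.congr fun n ↦ by rw [Prod.swap_prod_mk, hdiff, add_sub_cancel_right]
  simp_rw [hdiff]
  rw [hpoles.tsum_add (e2Summand_summable m τ), tsum_int_sub_succ_eq_zero hpole hpoles, zero_add]
  rfl

theorem wzeta_add_one_sub (z : ℂ) : wzeta τ (z + 1) - wzeta τ z = G2 τ := by
  have hs := (summable_zetaSummand τ (z + 1)).sub (summable_zetaSummand τ z)
  have hrows := hs.prod_symm.hasSum.prod_fiberwise fun m ↦ (hs.prod_symm.prod_factor m).hasSum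
  simp only [Prod.swap_prod_mk, tsum_zetaSummand_add_one_sub] at hrows
  rw [G2, tsum_eq_of_summable_unconditional hrows.summable, hrows.tsum_eq, wzeta_eq_tsum,
    wzeta_eq_tsum, ← (summable_zetaSummand τ (z + 1)).tsum_sub (summable_zetaSummand τ z)]
  exact ((Equiv.prodComm ℤ ℤ).tsum_eq _).symm

theorem eta1_eq_G2 : eta1 τ = G2 τ := by
  rw [← wzeta_add_one_sub τ (-(1 / 2)), wzeta_neg, eta1,
    show -(1 / 2) + 1 = (1 / 2 : ℂ) by norm_num]
  ring

theorem eta1_eq_E2 : eta1 τ = π ^ 2 / 3 * E2 τ := by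
  have hpi : (π : ℂ) ≠ 0 := by exact_mod_cast Real.pi_ne_zero
  rw [eta1_eq_G2, E2, Pi.smul_apply, smul_eq_mul, riemannZeta_two]
  field_simp
  ring

theorem g2_eq_E₄ : g2 τ = 4 * π ^ 4 / 3 * E₄ τ := by
  have hsum : ∑' p : {p : ℤ × ℤ // p ≠ 0}, 1 / latPt τ p ^ 4 = ∑' v, eisSummand (4 : ℕ) v τ := by
    have hsplit := tsum_eq_add_tsum_ne (summable_inv_latPt_pow τ (k := 4) (by norm_num)) 0
    rw [← ((finTwoArrowEquiv ℤ).trans (Equiv.prodComm ℤ ℤ)).tsum_eq] at hsplit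
    simp only [eisSummand_eq_latPt_zpow, zpow_neg, zpow_natCast]
    simpa [latPt_zero] using hsplit.symm
  have hE : eisensteinSeries (N := 1) 0 4 τ = 2 * E₄ τ := by
    change _ = 2 * ((1 / 2 : ℂ) * eisensteinSeries (N := 1) 0 4 τ)
    ring
  rw [g2, hsum, tsum_eisSummand_eq_riemannZeta_mul_eisensteinSeries (by norm_num)]
  push_cast
  rw [hE, riemannZeta_four]
  ring

end Lattice

theorem modularForm_S_smul {k : ℤ} (f : ModularForm 𝒮ℒ k) (z : ℍ) :
    f (ModularGroup.S • z) = (z : ℂ) ^ k * f z := by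
  have hinv : ⇑f ∣[k] ModularGroup.S = f :=
    SlashInvariantForm.slash_action_eqn f _ ⟨ModularGroup.S, rfl⟩
  have hslash := SlashInvariantForm.slash_S_apply f k z
  rw [hinv, ← modular_S_smul] at hslash
  rw [hslash, mul_left_comm, ← zpow_add₀ z.ne_zero, add_neg_cancel, zpow_zero, mul_one]

theorem E2_eq_E2_S_smul (z : ℍ) :
    E2 z = ((z : ℂ) ^ 2)⁻¹ * E2 (ModularGroup.S • z) + 6 * I / (π * z) := by
  have hpi : (π : ℂ) ≠ 0 := by exact_mod_cast Real.pi_ne_zero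
  have hz := z.ne_zero
  simp only [E2, Pi.smul_apply, smul_eq_mul, riemannZeta_two]
  rw [G2_S_transform z]
  field_simp
  ring

theorem E₄_eq_tsum_cexp (z : ℍ) :
    E₄ z = 1 + 240 * ∑' n : ℕ+, (σ 3 n : ℂ) * cexp (2 * π * I * z) ^ (n : ℕ) := by
  have hexp := q_expansion_bernoulli (k := 4) (by norm_num) (by decide) z
  have hcoeff : (2 * (4 : ℕ) / bernoulli 4 : ℂ) = -240 := by
    rw [bernoulli_eq_bernoulli'_of_ne_one (by norm_num), bernoulli'_four]
    norm_num
  rw [hcoeff] at hexp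
  simpa using hexp

section ImaginaryAxis

variable {z : ℍ} (hz : z.re = 0)
include hz

theorem coe_eq_im_mul_I : (z : ℂ) = z.im * I := by
  apply Complex.ext <;> simp [hz]

theorem tsum_sigma_mul_cexp_pow_pos (k : ℕ) :
    0 < ∑' n : ℕ+, (σ k n : ℂ) * cexp (2 * π * I * z) ^ (n : ℕ) := by
  have hq : cexp (2 * π * I * z) = (Real.exp (-(2 * π * z.im)) : ℝ) := by
    rw [coe_eq_im_mul_I hz, ofReal_exp]
    congr 1
    push_cast
    linear_combination (2 * π * z.im : ℂ) * I_sq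
  have hterm (n : ℕ+) : 0 < (σ k n : ℂ) * cexp (2 * π * I * z) ^ (n : ℕ) := by
    rw [hq]
    have hσ := ArithmeticFunction.sigma_pos k n n.ne_zero
    exact mul_pos (by exact_mod_cast hσ) (by exact_mod_cast pow_pos (Real.exp_pos _) n)
  exact ((summable_sigma_mul_cexp_pow k.succ_pos z).comp_injective PNat.coe_injective).tsum_pos
    (fun n ↦ (hterm n).le) 1 (hterm 1)

theorem E2_lt_one : E2 z < 1 := by
  rw [E2_eq_tsum_cexp]
  exact sub_lt_self _ (mul_pos (by norm_num) (tsum_sigma_mul_cexp_pow_pos hz 1))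

theorem one_lt_E₄ : 1 < E₄ z := by
  rw [E₄_eq_tsum_cexp]
  exact lt_add_of_pos_right _ (mul_pos (by norm_num) (tsum_sigma_mul_cexp_pow_pos hz 3))

theorem re_S_smul_eq_zero : (ModularGroup.S • z).re = 0 := by
  rw [modular_S_smul]
  simp [hz]

theorem neg_inv_im_sq_lt_E2 : -((z.im : ℂ) ^ 2)⁻¹ < E2 z := by
  have hy : (0 : ℂ) < z.im := by exact_mod_cast z.im_pos
  have hpi : (0 : ℂ) < π := by exact_mod_cast Real.pi_pos
  have htrans : E2 z = 6 / (π * z.im) - ((z.im : ℂ) ^ 2)⁻¹ * E2 (ModularGroup.S • z) := by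
    rw [E2_eq_E2_S_smul, coe_eq_im_mul_I hz, mul_pow, I_sq]
    field_simp
    ring
  have hlt := mul_lt_mul_of_pos_left (E2_lt_one (re_S_smul_eq_zero hz)) (inv_pos.mpr (pow_pos hy 2))
  have hpos : 0 < 6 / (π * z.im : ℂ) := div_pos (by norm_num) (mul_pos hpi hy)
  rw [htrans]
  linear_combination hlt + hpos

theorem inv_im_pow_four_lt_E₄ : ((z.im : ℂ) ^ 4)⁻¹ < E₄ z := by
  have hy : (0 : ℂ) < (z.im : ℂ) ^ 4 := by exact_mod_cast pow_pos z.im_pos 4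
  have hlt := one_lt_E₄ (re_S_smul_eq_zero hz)
  rw [modularForm_S_smul, coe_eq_im_mul_I hz, zpow_ofNat, mul_pow, I_pow_four, mul_one] at hlt
  exact (inv_lt_iff_one_lt_mul₀' hy).mpr hlt

theorem E2_sq_lt_E₄ : E2 z ^ 2 < E₄ z := by
  have hE2_lt := E2_lt_one hz
  have hlt_E2 := neg_inv_im_sq_lt_E2 hz
  have hlt_E₄ := one_lt_E₄ hz
  have hinv_lt_E₄ := inv_im_pow_four_lt_E₄ hz
  lift E2 z to ℝ using (Complex.lt_def.mp hE2_lt).2 with a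
  lift E₄ z to ℝ using (Complex.lt_def.mp hlt_E₄).2.symm with d
  norm_cast at hE2_lt hlt_E2 hlt_E₄ hinv_lt_E₄ ⊢
  have hsq_lt_E₄ : (z.im ^ 2)⁻¹ ^ 2 < d := by rwa [← inv_pow, ← pow_mul, inv_pow]
  rcases le_total 0 a with ha | ha
  · exact (pow_lt_one₀ ha hE2_lt two_ne_zero).trans hlt_E₄
  · exact (sq_lt_sq' hlt_E2 (ha.trans_lt (inv_pos.mpr (pow_pos z.im_pos 2)))).trans hsq_lt_E₄

end ImaginaryAxis

/-- For `τ = ib` with `b > 0`, the quantity `g₂(τ) - 12 η₁(τ)²` is real and positive. -/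
theorem stmt_13 (b : ℝ) (hb : 0 < b) :
    (g2 (Complex.I * b) - 12 * eta1 (Complex.I * b) ^ 2).im = 0 ∧
      0 < (g2 (Complex.I * b) - 12 * eta1 (Complex.I * b) ^ 2).re := by
  obtain ⟨τ, hτ, hre⟩ : ∃ τ : ℍ, (τ : ℂ) = Complex.I * b ∧ τ.re = 0 :=
    ⟨⟨Complex.I * b, by simpa using hb⟩, rfl, by simp [UpperHalfPlane.re]⟩
  have hpi : (0 : ℂ) < 4 * π ^ 4 / 3 := by exact_mod_cast (by positivity : 0 < 4 * π ^ 4 / 3)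
  have hpos : 0 < g2 τ - 12 * eta1 τ ^ 2 := by
    calc 0 < 4 * π ^ 4 / 3 * (E₄ τ - E2 τ ^ 2) := mul_pos hpi (sub_pos.mpr (E2_sq_lt_E₄ hre))
      _ = g2 τ - 12 * eta1 τ ^ 2 := by rw [g2_eq_E₄, eta1_eq_E2]; ring
  rw [← hτ]
  exact (Complex.pos_iff.mp hpos).symm.imp_left Eq.symm
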